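/- arXiv:2402.01990 — 4 statements merged into one kernel-verified Lean document; each statement's English description precedes it below -/
import Mathlib

section
/- For every real number Λ > 0 and every nonnegative integer p there exists a constant C > 0, depending only on Λ, p and the graph data (V, w, μ), such that: for every σ ∈ [0,1], every λ ∈ ℝ and every f : V → ℝ satisfying Λ⁻¹ ≤ |λ| ≤ Λ, Λ⁻¹ ≤ |∫_V f dμ| ≤ Λ and |f(x)| ≤ Λ for all x ∈ V, any function u : V → ℝ solving Δu(x) = λ·e^{u(x)}·(e^{u(x)} − σ)^{2p+1} + f(x) for all x ∈ V satisfies |u(x)| ≤ C for all x ∈ V. -/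
/-!
Write `g s = s (s - σ)^(2p+1)`, so that the nonlinearity is `lam * g (exp (u x))`.

Since the weights are symmetric, `glap` integrates to zero, hence `lam * ∫ g (exp u) = -∫ f`. This
pins `|∫ g (exp u)|` between `Λ⁻²` and `Λ²`.

* Upper bound: `g ≥ -1` on `(0, ∞)`, so the upper bound on the integral bounds `g (exp (u x))` from
  above at every vertex; as `g s ≥ s` for `s ≥ 2`, this bounds `u` from above. The right-hand side
  of the equation is then bounded as well.
* Lower bound at one vertex: `|g s| ≤ s` for `s ≤ 1`, so if `exp u` were small at every vertex the
  integral would be smaller than `Λ⁻²` in absolute value.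
* Propagation: when `u` is bounded above everywhere and `glap u` is bounded below, a lower bound on
  `u` at one vertex passes to its neighbours (`lower_bound_step`), and so along paths to the whole
  connected graph (`lower_bound_reachable`).
-/

open Real

/-- Graph Laplacian: `Δu(x) = (1/μ(x)) Σ_y w x y (u y − u x)`. -/
noncomputable def glap {V : Type*} [Fintype V] (w : V → V → ℝ) (μ : V → ℝ)
    (u : V → ℝ) (x : V) : ℝ :=
  (1 / μ x) * ∑ y, w x y * (u y - u x)

/-- Integral over the graph: `∫_V g dμ = Σ_x μ(x) g(x)`. -/
noncomputable def gint {V : Type*} [Fintype V] (μ : V → ℝ) (g : V → ℝ) : ℝ :=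
  ∑ x, μ x * g x

/-- Gradient norm squared: `|∇u|²(x) = (1/(2μ(x))) Σ_y w x y (u y − u x)²`. -/
noncomputable def gradsq {V : Type*} [Fintype V] (w : V → V → ℝ) (μ : V → ℝ)
    (u : V → ℝ) (x : V) : ℝ :=
  (1 / (2 * μ x)) * ∑ y, w x y * (u y - u x) ^ 2

/-- The functional `J_λ(u) = (1/2)∫|∇u|² + (λ/(2p+2))∫(e^u−1)^{2p+2} + ∫ f u dμ`. -/
noncomputable def Jfun {V : Type*} [Fintype V] (w : V → V → ℝ) (μ : V → ℝ)
    (p : ℕ) (lam : ℝ) (f : V → ℝ) (u : V → ℝ) : ℝ :=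
  (1 / 2) * gint μ (gradsq w μ u)
    + (lam / (2 * p + 2)) * gint μ (fun x => (Real.exp (u x) - 1) ^ (2 * p + 2))
    + gint μ (fun x => f x * u x)


lemma gint_glap_eq_zero {V : Type*} [Fintype V] {w : V → V → ℝ} {μ : V → ℝ}
    (hsymm : ∀ x y, w x y = w y x) (hμ : ∀ x, 0 < μ x) (u : V → ℝ) :
    gint μ (glap w μ u) = 0 := by
  have h1 : gint μ (glap w μ u) = ∑ x, ∑ y, w x y * (u y - u x) := by
    unfold gint glap
    refine Finset.sum_congr rfl fun x _ => ?_
    have := (hμ x).ne'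
    field_simp
  have h2 : ∑ x, ∑ y, w x y * (u y - u x) = -∑ x, ∑ y, w x y * (u y - u x) := by
    conv_lhs => rw [Finset.sum_comm]
    simp only [← Finset.sum_neg_distrib]
    refine Finset.sum_congr rfl fun x _ => Finset.sum_congr rfl fun y _ => ?_
    rw [hsymm y x]
    ring
  linarith

section Nonlinearity

variable {s σ : ℝ} (p : ℕ)

lemma abs_nonlin_le (hs : 0 < s) (hs1 : s ≤ 1) (hσ : σ ∈ Set.Icc (0 : ℝ) 1) :
    |s * (s - σ) ^ (2 * p + 1)| ≤ s := by
  obtain ⟨h0, h1⟩ := hσ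
  rw [abs_mul, abs_of_pos hs, abs_pow]
  have h : |s - σ| ≤ 1 := abs_le.2 ⟨by linarith, by linarith⟩
  exact mul_le_of_le_one_right hs.le (pow_le_one₀ (abs_nonneg _) h)

lemma neg_one_le_nonlin (hs : 0 < s) (hσ : σ ∈ Set.Icc (0 : ℝ) 1) :
    -1 ≤ s * (s - σ) ^ (2 * p + 1) := by
  rcases le_total s 1 with h | h
  · have := (abs_le.1 (abs_nonlin_le p hs h hσ)).1
    linarith
  · have : 0 ≤ s - σ := by linarith [hσ.2]
    have : 0 ≤ s * (s - σ) ^ (2 * p + 1) := by positivity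
    linarith

lemma le_nonlin (hs : 2 ≤ s) (hσ : σ ∈ Set.Icc (0 : ℝ) 1) :
    s ≤ s * (s - σ) ^ (2 * p + 1) :=
  le_mul_of_one_le_right (by linarith) (one_le_pow₀ (by linarith [hσ.2]))

end Nonlinearity

/-- In `μ x * glap u x = ∑ z, w x z * (u z - u x)` every term is at most `w x z * (M - a)`, so the
term of the neighbour `y` cannot be very negative. -/
lemma lower_bound_step {V : Type*} [Fintype V] {w : V → V → ℝ} {μ : V → ℝ}
    (hnonneg : ∀ x y, 0 ≤ w x y) (hμ : ∀ x, 0 < μ x) {M B a : ℝ} {x y : V} (hxy : 0 < w x y)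
    {u : V → ℝ} (hM : ∀ z, u z ≤ M) (hB : ∀ z, -B ≤ glap w μ u z) (ha : a ≤ u x) :
    a - (μ x * B + ∑ z, w x z * (M - a)) / w x y ≤ u y := by
  classical
  have h1 : ∑ z, w x z * (u z - u x) = μ x * glap w μ u x := by
    unfold glap
    have := (hμ x).ne'
    field_simp
  have h2 : μ x * -B ≤ μ x * glap w μ u x := mul_le_mul_of_nonneg_left (hB x) (hμ x).le
  have hterm : ∀ z, w x z * (u z - u x) ≤ w x z * (M - a) := fun z =>
    mul_le_mul_of_nonneg_left (by linarith [hM z]) (hnonneg x z)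
  have h3 : ∑ z ∈ Finset.univ.erase y, w x z * (u z - u x) ≤ ∑ z, w x z * (M - a) :=
    (Finset.sum_le_sum fun z _ => hterm z).trans
      (Finset.sum_le_sum_of_subset_of_nonneg (Finset.erase_subset _ _) fun z _ _ =>
        mul_nonneg (hnonneg x z) (by linarith [hM x]))
  have h4 := Finset.add_sum_erase Finset.univ (fun z => w x z * (u z - u x)) (Finset.mem_univ y)
  have h5 : -(μ x * B + ∑ z, w x z * (M - a)) ≤ w x y * (u y - u x) := by
    linarith
  have h6 : -((μ x * B + ∑ z, w x z * (M - a)) / w x y) ≤ u y - u x := by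
    rw [← neg_div, div_le_iff₀ hxy]
    linarith
  linarith

/-- The bound `b` at `y` depends only on the graph and on `M`, `B`, `a`, not on `u`. -/
lemma lower_bound_reachable {V : Type*} [Fintype V] {w : V → V → ℝ} {μ : V → ℝ}
    (hsymm : ∀ x y, w x y = w y x) (hnonneg : ∀ x y, 0 ≤ w x y) (hμ : ∀ x, 0 < μ x)
    (M B a : ℝ) {x y : V}
    (hxy : (SimpleGraph.fromRel (fun x y => 0 < w x y)).Reachable x y) :
    ∃ b : ℝ, ∀ u : V → ℝ, (∀ z, u z ≤ M) → (∀ z, -B ≤ glap w μ u z) → a ≤ u x → b ≤ u y := by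
  obtain ⟨walk⟩ := hxy
  induction walk generalizing a with
  | nil => exact ⟨a, fun u _ _ h => h⟩
  | @cons x v y hadj _ ih =>
    have hpos : 0 < w x v := by
      rcases (SimpleGraph.fromRel_adj _ _ _).1 hadj with ⟨-, h | h⟩
      · exact h
      · rwa [hsymm]
    obtain ⟨b, hb⟩ := ih (a - (μ x * B + ∑ z, w x z * (M - a)) / w x v)
    exact ⟨b, fun u hM hB ha => hb u hM hB (lower_bound_step hnonneg hμ hpos hM hB ha)⟩

theorem stmt_0 {V : Type*} [Fintype V] [Nonempty V]
    (w : V → V → ℝ) (μ : V → ℝ)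
    (hsymm : ∀ x y, w x y = w y x) (hnonneg : ∀ x y, 0 ≤ w x y)
    (hμ : ∀ x, 0 < μ x)
    (hconn : (SimpleGraph.fromRel (fun x y => 0 < w x y)).Connected)
    (Λ : ℝ) (hΛ : 0 < Λ) (p : ℕ) :
    ∃ C > 0, ∀ σ : ℝ, σ ∈ Set.Icc (0 : ℝ) 1 → ∀ lam : ℝ, ∀ f : V → ℝ,
      Λ⁻¹ ≤ |lam| → |lam| ≤ Λ →
      Λ⁻¹ ≤ |gint μ f| → |gint μ f| ≤ Λ →
      (∀ x, |f x| ≤ Λ) →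
      ∀ u : V → ℝ,
        (∀ x, glap w μ u x
            = lam * Real.exp (u x) * (Real.exp (u x) - σ) ^ (2 * p + 1) + f x) →
        ∀ x, |u x| ≤ C := by
  have hvol : 0 < ∑ x, μ x := Finset.sum_pos (fun x _ => hμ x) Finset.univ_nonempty
  set vol := ∑ x, μ x with hvoldef
  -- `G` bounds `g (exp u)`, `M` bounds `u`, and `-B` bounds the Laplacian from below.
  set G : ℝ := ∑ x, (Λ ^ 2 + vol) / μ x with hG
  have hG0 : 0 ≤ G := Finset.sum_nonneg fun x _ => by have := hμ x; positivity
  set M : ℝ := 2 + G with hMdef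
  set B : ℝ := Λ * (G + 1) + Λ with hBdef
  -- `exp u` cannot be below `δ` everywhere, because `δ * vol ≤ Λ⁻²`.
  set δ : ℝ := min 1 ((Λ ^ 2)⁻¹ / vol) with hδdef
  have hδ : 0 < δ := lt_min one_pos (by positivity)
  choose b hb using fun x y =>
    lower_bound_reachable hsymm hnonneg hμ M B (Real.log δ) (hconn.preconnected x y)
  have hS : 0 ≤ ∑ x, ∑ y, |b x y| :=
    Finset.sum_nonneg fun x _ => Finset.sum_nonneg fun y _ => abs_nonneg _
  refine ⟨M + ∑ x, ∑ y, |b x y|, by positivity, ?_⟩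
  intro σ hσ lam f hl1 hl2 hf1 hf2 hf u hu
  set g : V → ℝ := fun x => Real.exp (u x) * (Real.exp (u x) - σ) ^ (2 * p + 1) with hg
  have hu' : ∀ x, glap w μ u x = lam * g x + f x := fun x => by rw [hu x, hg, mul_assoc]
  have hgint : lam * gint μ g = -gint μ f := by
    have h0 := gint_glap_eq_zero hsymm hμ u
    have h1 : gint μ (glap w μ u) = lam * gint μ g + gint μ f := by
      unfold gint
      rw [Finset.mul_sum, ← Finset.sum_add_distrib]
      refine Finset.sum_congr rfl fun x _ => ?_
      rw [hu' x]
      ring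
    linarith
  have habs : |lam| * |gint μ g| = |gint μ f| := by rw [← abs_mul, hgint, abs_neg]
  have hI0 := abs_nonneg (gint μ g)
  have hup : |gint μ g| ≤ Λ ^ 2 := by
    have h : Λ⁻¹ * |gint μ g| ≤ Λ := (mul_le_mul_of_nonneg_right hl1 hI0).trans (habs.trans_le hf2)
    rw [inv_mul_le_iff₀ hΛ] at h
    linarith
  have hlow : (Λ ^ 2)⁻¹ ≤ |gint μ g| := by
    have h : Λ⁻¹ ≤ Λ * |gint μ g| :=
      hf1.trans (habs.symm.trans_le (mul_le_mul_of_nonneg_right hl2 hI0))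
    rw [inv_le_iff_one_le_mul₀ hΛ] at h
    rw [inv_le_iff_one_le_mul₀ (by positivity)]
    linarith
  have hg1 : ∀ x, -1 ≤ g x := fun x => neg_one_le_nonlin p (Real.exp_pos _) hσ
  have hgG : ∀ x, g x + 1 ≤ G := by
    intro x
    have h1 : μ x * (g x + 1) ≤ ∑ z, μ z * (g z + 1) :=
      Finset.single_le_sum (f := fun z => μ z * (g z + 1))
        (fun z _ => mul_nonneg (hμ z).le (by linarith [hg1 z])) (Finset.mem_univ x)
    have h2 : ∑ z, μ z * (g z + 1) = gint μ g + vol := by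
      simp only [mul_add, mul_one, Finset.sum_add_distrib, gint, hvoldef]
    have h3 : g x + 1 ≤ (Λ ^ 2 + vol) / μ x := by
      rw [le_div_iff₀ (hμ x)]
      linarith [le_abs_self (gint μ g)]
    exact h3.trans (Finset.single_le_sum (f := fun z => (Λ ^ 2 + vol) / μ z)
      (fun z _ => by have := hμ z; positivity) (Finset.mem_univ x))
  have huM : ∀ x, u x ≤ M := by
    intro x
    have he := Real.add_one_le_exp (u x)
    rcases le_total (Real.exp (u x)) 2 with h | h
    · linarith
    · have h1 : Real.exp (u x) ≤ g x := le_nonlin p h hσ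
      linarith [hgG x]
  have huB : ∀ x, -B ≤ glap w μ u x := by
    intro x
    have h1 : |lam * g x| ≤ Λ * (G + 1) := by
      rw [abs_mul]
      exact mul_le_mul hl2 (abs_le.2 ⟨by linarith [hg1 x], by linarith [hgG x]⟩)
        (abs_nonneg _) hΛ.le
    rw [hu' x]
    linarith [(abs_le.1 h1).1, (abs_le.1 (hf x)).1]
  obtain ⟨x₀, hx₀⟩ : ∃ x, δ ≤ Real.exp (u x) := by
    by_contra! hlt
    have h1 : |gint μ g| < ∑ x, μ x * δ := by
      refine (Finset.abs_sum_le_sum_abs _ _).trans_lt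
        (Finset.sum_lt_sum_of_nonempty Finset.univ_nonempty fun x _ => ?_)
      rw [abs_mul, abs_of_pos (hμ x)]
      refine mul_lt_mul_of_pos_left ?_ (hμ x)
      exact (abs_nonlin_le p (Real.exp_pos _)
        ((hlt x).le.trans (min_le_left _ _)) hσ).trans_lt (hlt x)
    have h2 : δ * vol ≤ (Λ ^ 2)⁻¹ := (le_div_iff₀ hvol).1 (min_le_right _ _)
    rw [← Finset.sum_mul] at h1
    linarith
  have ha : Real.log δ ≤ u x₀ := (Real.log_le_iff_le_exp hδ).2 hx₀
  intro x
  have h1 := hb x₀ x u huM huB ha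
  have h2 : |b x₀ x| ≤ ∑ x, ∑ y, |b x y| :=
    (Finset.single_le_sum (f := fun y => |b x₀ y|) (fun _ _ => abs_nonneg _)
      (Finset.mem_univ x)).trans
      (Finset.single_le_sum (f := fun x => ∑ y, |b x y|)
        (fun _ _ => Finset.sum_nonneg fun _ _ => abs_nonneg _) (Finset.mem_univ x₀))
  exact abs_le.2 ⟨by linarith [neg_abs_le (b x₀ x)], by linarith [huM x]⟩
end

section
/- Let Λ > 0, σ ∈ [0,1], λ ∈ ℝ and f : V → ℝ satisfy Λ⁻¹ ≤ |λ| ≤ Λ and |∫_V f dμ| ≤ Λ. If u : V → ℝ solves Δu(x) = λ·e^{u(x)}·(e^{u(x)} − σ)^{2p+1} + f(x) for all x ∈ V, then max_{x∈V} u(x) ≤ ln(1 + (c₁/μ₀)^{1/(2p+1)}), where c₁ = |V| + Λ² and μ₀ = min_{x∈V} μ(x). -/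
/-!
The Laplacian has zero integral because `w` is symmetric. Integrating the equation therefore gives
`λ ∫ e^u (e^u - σ)^(2p+1) dμ = -∫ f dμ`, so the integral of `g = e^u (e^u - σ)^(2p+1)` is at most
`Λ²`. Since `g ≥ -1` pointwise, `μ x (g x + 1) ≤ ∫ (g + 1) dμ ≤ |V| + Λ²` at every vertex `x`.
Where `u x > 0`, `g x` dominates `(e^(u x) - 1)^(2p+1)`, and taking the root gives the bound.
-/

open Real

/-- Divergence theorem on a finite graph: the Laplacian has zero integral. -/
lemma gint_glap {V : Type*} [Fintype V] (w : V → V → ℝ) (μ : V → ℝ)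
    (hsymm : ∀ x y, w x y = w y x) (hμ : ∀ x, 0 < μ x) (u : V → ℝ) :
    gint μ (glap w μ u) = 0 := by
  have h1 : gint μ (glap w μ u) = ∑ x, ∑ y, w x y * (u y - u x) := by
    unfold gint glap
    refine Finset.sum_congr rfl fun x _ => ?_
    have := (hμ x).ne'
    field_simp
  have h2 : ∑ x, ∑ y, w x y * (u y - u x) = -∑ x, ∑ y, w x y * (u y - u x) := by
    conv_lhs => rw [Finset.sum_comm]
    simp only [← Finset.sum_neg_distrib]
    refine Finset.sum_congr rfl fun x _ => Finset.sum_congr rfl fun y _ => ?_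
    rw [hsymm y x]
    ring
  linarith

lemma neg_one_le_mul_pow {t σ : ℝ} (ht : 0 < t) (hσ : σ ≤ 1) (p : ℕ) :
    -1 ≤ t * (t - σ) ^ (2 * p + 1) := by
  rcases le_total σ t with h | h
  · have : 0 ≤ t * (t - σ) ^ (2 * p + 1) := mul_nonneg ht.le (pow_nonneg (by linarith) _)
    linarith
  · have h1 : (σ - t) ^ (2 * p + 1) ≤ 1 := pow_le_one₀ (by linarith) (by linarith)
    have h0 : 0 ≤ (σ - t) ^ (2 * p + 1) := pow_nonneg (by linarith) _
    have h2 : (t - σ) ^ (2 * p + 1) = -(σ - t) ^ (2 * p + 1) := by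
      rw [← neg_sub σ t, Odd.neg_pow ⟨p, rfl⟩]
    rw [h2]
    nlinarith

theorem stmt_2 {V : Type*} [Fintype V] [Nonempty V]
    (w : V → V → ℝ) (μ : V → ℝ)
    (hsymm : ∀ x y, w x y = w y x) (hnonneg : ∀ x y, 0 ≤ w x y)
    (hμ : ∀ x, 0 < μ x) (p : ℕ)
    (Λ : ℝ) (hΛ : 0 < Λ) (σ : ℝ) (hσ : σ ∈ Set.Icc (0 : ℝ) 1)
    (lam : ℝ) (f : V → ℝ)
    (hlam₁ : Λ⁻¹ ≤ |lam|) (hlam₂ : |lam| ≤ Λ) (hf : |gint μ f| ≤ Λ)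
    (u : V → ℝ)
    (hu : ∀ x, glap w μ u x
        = lam * Real.exp (u x) * (Real.exp (u x) - σ) ^ (2 * p + 1) + f x) :
    ∀ x, u x ≤
      Real.log (1 + ((gint μ (fun _ => 1) + Λ ^ 2) / (⨅ y, μ y))
        ^ ((1 : ℝ) / (2 * p + 1))) := by
  intro x
  set g : V → ℝ := fun y => Real.exp (u y) * (Real.exp (u y) - σ) ^ (2 * p + 1) with hg
  have hint : lam * gint μ g = -gint μ f := by
    have h0 := gint_glap w μ hsymm hμ u
    have h1 : gint μ (glap w μ u) = lam * gint μ g + gint μ f := by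
      unfold gint
      rw [Finset.mul_sum, ← Finset.sum_add_distrib]
      refine Finset.sum_congr rfl fun y _ => ?_
      rw [hu y, hg]
      ring
    linarith
  have hgint : gint μ g ≤ Λ ^ 2 := by
    have h1 : |lam| * |gint μ g| ≤ Λ := by rw [← abs_mul, hint, abs_neg]; exact hf
    have h2 : Λ⁻¹ * |gint μ g| ≤ Λ :=
      (mul_le_mul_of_nonneg_right hlam₁ (abs_nonneg _)).trans h1
    rw [inv_mul_le_iff₀ hΛ] at h2
    nlinarith [le_abs_self (gint μ g)]
  have hg1 : ∀ y, -1 ≤ g y := fun y => neg_one_le_mul_pow (Real.exp_pos _) hσ.2 p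
  have hsingle : μ x * (g x + 1) ≤ gint μ (fun _ => 1) + Λ ^ 2 := by
    have h1 : μ x * (g x + 1) ≤ ∑ y, μ y * (g y + 1) :=
      Finset.single_le_sum (f := fun y => μ y * (g y + 1))
        (fun y _ => mul_nonneg (hμ y).le (by linarith [hg1 y])) (Finset.mem_univ x)
    have h2 : ∑ y, μ y * (g y + 1) = gint μ g + gint μ (fun _ => 1) := by
      unfold gint
      rw [← Finset.sum_add_distrib]
      exact Finset.sum_congr rfl fun y _ => by ring
    linarith
  have hμ0 : 0 < ⨅ y, μ y := by
    obtain ⟨z, hz⟩ := exists_eq_ciInf_of_finite (f := μ)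
    rw [← hz]
    exact hμ z
  have hμx : ⨅ y, μ y ≤ μ x := ciInf_le (Set.finite_range μ).bddBelow x
  have hc : 0 ≤ gint μ (fun _ => 1) + Λ ^ 2 :=
    (mul_nonneg (hμ x).le (by linarith [hg1 x])).trans hsingle
  set C := (gint μ (fun _ => 1) + Λ ^ 2) / (⨅ y, μ y) with hC
  have hC0 : 0 ≤ C := div_nonneg hc hμ0.le
  have hr0 : 0 ≤ C ^ ((1 : ℝ) / (2 * p + 1)) := Real.rpow_nonneg hC0 _
  rw [Real.le_log_iff_exp_le (by linarith)]
  rcases le_or_gt (u x) 0 with hx | hx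
  · have := Real.exp_le_one_iff.2 hx
    linarith
  have he : 1 < Real.exp (u x) := Real.one_lt_exp_iff.2 hx
  have hpow : (Real.exp (u x) - 1) ^ (2 * p + 1) ≤ C := by
    have h1 : (Real.exp (u x) - 1) ^ (2 * p + 1) ≤ (Real.exp (u x) - σ) ^ (2 * p + 1) :=
      pow_le_pow_left₀ (by linarith) (by linarith [hσ.2]) _
    have h0 : 0 ≤ (Real.exp (u x) - 1) ^ (2 * p + 1) := pow_nonneg (by linarith) _
    have h2 : (Real.exp (u x) - 1) ^ (2 * p + 1) ≤ g x :=
      h1.trans (le_mul_of_one_le_left (h0.trans h1) he.le)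
    rw [hC, le_div_iff₀ hμ0]
    calc (Real.exp (u x) - 1) ^ (2 * p + 1) * ⨅ y, μ y
        ≤ (Real.exp (u x) - 1) ^ (2 * p + 1) * μ x := mul_le_mul_of_nonneg_left hμx h0
      _ ≤ (g x + 1) * μ x := mul_le_mul_of_nonneg_right (by linarith) (hμ x).le
      _ ≤ _ := by rw [mul_comm]; exact hsingle
  have hroot : Real.exp (u x) - 1 ≤ C ^ ((1 : ℝ) / (2 * p + 1)) := by
    have h1 := Real.pow_rpow_inv_natCast (x := Real.exp (u x) - 1) (n := 2 * p + 1)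
      (by linarith) (by omega)
    rw [← h1, one_div]
    push_cast
    exact Real.rpow_le_rpow (pow_nonneg (by linarith) _) hpow (by positivity)
  linarith
end

section
/- Let V have m vertices and let w₀ = min{w x y : x,y ∈ V, w x y > 0} > 0. Then for every u : V → ℝ, max_{V} u − min_{V} u ≤ √((m−1)/w₀) · (∫_V |∇u|² dμ)^{1/2}. -/
/-! Join `x` to `y` by a path with `n ≤ m - 1` edges. By Cauchy–Schwarz, `(u x - u y)²` is at most
`n` times the sum of the squared increments of `u` along the path. Each edge of the path has weight
at least `w₀`, and the edges are distinct, so that sum is at most `(1 / w₀) ∫ |∇u|² dμ`, where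
`∫ |∇u|² dμ = (1/2) Σ_{a,b} w a b (u b - u a)²`.

Cauchy–Schwarz and the comparison of energies are run together as one induction on the path
(`path_sq_le`), with the double sum restricted to the vertices visited. Prepending a vertex `v`
which is not yet visited adds to this double sum (`energyOn_insert_ge`) at least the contributions
of `(v, b)` and `(b, v)`, where `b` is the next vertex. -/

open Real

/-- The Dirichlet energy over ordered pairs of vertices of `S`; each edge inside `S` is counted
twice. -/
noncomputable def energyOn {V : Type*} (w : V → V → ℝ) (u : V → ℝ) (S : Finset V) : ℝ :=
  ∑ a ∈ S, ∑ b ∈ S, w a b * (u b - u a) ^ 2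

lemma energyOn_insert_ge {V : Type*} [DecidableEq V] {w : V → V → ℝ}
    (hsymm : ∀ x y, w x y = w y x) (hnonneg : ∀ x y, 0 ≤ w x y) (u : V → ℝ)
    {S : Finset V} {v b : V} (hv : v ∉ S) (hb : b ∈ S) :
    energyOn w u S + 2 * (w v b * (u v - u b) ^ 2) ≤ energyOn w u (insert v S) := by
  have hrow : w v b * (u b - u v) ^ 2 ≤ ∑ c ∈ S, w v c * (u c - u v) ^ 2 :=
    Finset.single_le_sum (f := fun c => w v c * (u c - u v) ^ 2)
      (fun c _ => mul_nonneg (hnonneg _ _) (sq_nonneg _)) hb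
  have hcol : ∑ a ∈ S, w a v * (u v - u a) ^ 2 = ∑ c ∈ S, w v c * (u c - u v) ^ 2 :=
    Finset.sum_congr rfl fun a _ => by rw [hsymm a v]; ring
  have hsq : (u v - u b) ^ 2 = (u b - u v) ^ 2 := by ring
  simp only [energyOn, Finset.sum_insert hv, Finset.sum_add_distrib, hcol, hsq]
  linarith [show w v v * (u v - u v) ^ 2 = 0 by simp]

/-- The Cauchy–Schwarz step for adding one increment `a` to a sum `b` of `n` increments. -/
lemma sq_add_step {c n E a b : ℝ} (hc : 0 ≤ c) (hn : 0 ≤ n) (hE : 0 ≤ E)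
    (h : c * b ^ 2 ≤ n * E) : c * (a + b) ^ 2 ≤ (n + 1) * (E + c * a ^ 2) := by
  have hX : 0 ≤ n * (c * a ^ 2) + E := by positivity
  have key : (2 * c * a * b) ^ 2 ≤ (n * (c * a ^ 2) + E) ^ 2 := by
    have h' := mul_le_mul_of_nonneg_left h (show 0 ≤ 4 * (c * a ^ 2) by positivity)
    nlinarith [sq_nonneg (n * (c * a ^ 2) - E)]
  have := (abs_le_of_sq_le_sq' key hX).2
  nlinarith

lemma path_sq_le {V : Type*} [DecidableEq V] {w : V → V → ℝ}
    (hsymm : ∀ x y, w x y = w y x) (hnonneg : ∀ x y, 0 ≤ w x y)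
    {w₀ : ℝ} (hw₀ : 0 ≤ w₀) {G : SimpleGraph V} (hG : ∀ a b, G.Adj a b → w₀ ≤ w a b)
    (u : V → ℝ) {x y : V} (p : G.Walk x y) (hp : p.IsPath) :
    2 * w₀ * (u x - u y) ^ 2 ≤ p.length * energyOn w u p.support.toFinset := by
  induction p with
  | nil => simp
  | @cons v b z hadj q ih =>
    rw [SimpleGraph.Walk.cons_isPath_iff] at hp
    have hE : 0 ≤ energyOn w u q.support.toFinset :=
      Finset.sum_nonneg fun _ _ => Finset.sum_nonneg fun _ _ =>
        mul_nonneg (hnonneg _ _) (sq_nonneg _)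
    have hins := energyOn_insert_ge hsymm hnonneg u (S := q.support.toFinset) (v := v) (b := b)
      (by simpa using hp.2) (by simp)
    have hedge := mul_le_mul_of_nonneg_right (hG v b hadj) (sq_nonneg (u v - u b))
    have hstep := sq_add_step (a := u v - u b) (by positivity : 0 ≤ 2 * w₀)
      (Nat.cast_nonneg q.length) hE (ih hp.1)
    rw [SimpleGraph.Walk.support_cons, List.toFinset_cons, SimpleGraph.Walk.length_cons]
    push_cast
    calc 2 * w₀ * (u v - u z) ^ 2 = 2 * w₀ * (u v - u b + (u b - u z)) ^ 2 := by ring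
      _ ≤ _ := hstep
      _ ≤ _ := mul_le_mul_of_nonneg_left (by linarith) (by positivity)

lemma gint_gradsq {V : Type*} [Fintype V] (w : V → V → ℝ) {μ : V → ℝ} (hμ : ∀ x, 0 < μ x)
    (u : V → ℝ) : 2 * gint μ (gradsq w μ u) = energyOn w u Finset.univ := by
  rw [gint, energyOn, Finset.mul_sum]
  refine Finset.sum_congr rfl fun x _ => ?_
  have := (hμ x).ne'
  rw [gradsq]
  field_simp

theorem stmt_3 {V : Type*} [Fintype V] [Nonempty V]
    (w : V → V → ℝ) (μ : V → ℝ)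
    (hsymm : ∀ x y, w x y = w y x) (hnonneg : ∀ x y, 0 ≤ w x y)
    (hμ : ∀ x, 0 < μ x)
    (hconn : (SimpleGraph.fromRel (fun x y => 0 < w x y)).Connected)
    (w₀ : ℝ) (hw₀pos : 0 < w₀)
    (hw₀ : IsLeast {c : ℝ | ∃ x y, 0 < w x y ∧ w x y = c} w₀) :
    ∀ u : V → ℝ, ∀ x y : V,
      u x - u y ≤ Real.sqrt (((Fintype.card V : ℝ) - 1) / w₀)
        * Real.sqrt (gint μ (gradsq w μ u)) := by
  classical
  intro u x y
  obtain ⟨p, hp⟩ := hconn.exists_isPath x y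
  have hG : ∀ a b, (SimpleGraph.fromRel (fun x y => 0 < w x y)).Adj a b → w₀ ≤ w a b := by
    intro a b hab
    rw [SimpleGraph.fromRel_adj, hsymm b a, or_self] at hab
    exact hw₀.2 ⟨a, b, hab.2, rfl⟩
  have hpath := path_sq_le hsymm hnonneg hw₀pos.le hG u p hp
  have hterm : ∀ a b, 0 ≤ w a b * (u b - u a) ^ 2 := fun a b =>
    mul_nonneg (hnonneg _ _) (sq_nonneg _)
  have hmono : energyOn w u p.support.toFinset ≤ energyOn w u Finset.univ :=
    (Finset.sum_le_sum fun a _ => Finset.sum_le_sum_of_subset_of_nonneg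
        (Finset.subset_univ _) fun b _ _ => hterm a b).trans
      (Finset.sum_le_sum_of_subset_of_nonneg (Finset.subset_univ _)
        fun a _ _ => Finset.sum_nonneg fun b _ => hterm a b)
  have hE : 0 ≤ energyOn w u Finset.univ :=
    Finset.sum_nonneg fun a _ => Finset.sum_nonneg fun b _ => hterm a b
  have hlen : (p.length : ℝ) ≤ Fintype.card V - 1 := by
    have : ((p.length + 1 : ℕ) : ℝ) ≤ Fintype.card V := Nat.cast_le.mpr hp.length_lt
    push_cast at this
    linarith
  have hm : (0 : ℝ) ≤ Fintype.card V - 1 := (Nat.cast_nonneg _).trans hlen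
  have hbound : 2 * w₀ * (u x - u y) ^ 2 ≤ (Fintype.card V - 1) * energyOn w u Finset.univ :=
    hpath.trans ((mul_le_mul_of_nonneg_left hmono (Nat.cast_nonneg _)).trans
      (mul_le_mul_of_nonneg_right hlen hE))
  rw [← gint_gradsq w hμ u] at hbound
  rw [← Real.sqrt_mul (div_nonneg hm hw₀pos.le)]
  apply Real.le_sqrt_of_sq_le
  rw [div_mul_eq_mul_div, le_div_iff₀ hw₀pos]
  linarith
end

section
/- For every Λ > 0 and nonnegative integer p there exists ε₀ > 0, depending only on Λ, p and the graph data (V, w, μ), such that for every ε ∈ (0, ε₀), every λ ∈ ℝ with Λ⁻¹ ≤ |λ| ≤ Λ and every f : V → ℝ with |∫_V f dμ| ≤ Λ, the equation Δu(x) = λ·e^{(2p+2)u(x)} + ε·f(x) (for all x ∈ V) has at most one solution u : V → ℝ. -/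
/-!
Summing the equation against `μ` kills the Laplacian, so `lam * ∫ e^{(2p+2)u} dμ = -ε ∫ f dμ`.
Hence every solution satisfies `∫ e^{(2p+2)u} dμ ≤ ε Λ²`: it is very negative everywhere, and
the nonlinearity has a tiny Lipschitz constant along solutions, whatever `f` is.

Let `d = u - v` for two solutions. Both exponentials have the same integral (`sum_mul_exp`), so
`d` takes a nonpositive and a nonnegative value, and `max d²` is at most the squared oscillation
of `d`, which the Poincaré inequality `exists_poincare` on the connected graph bounds by a
constant times the Dirichlet energy of `d`. Testing the equation for `d` against `d`
(`sum_mul_lap`) bounds that energy by a constant times `ε max d²`. For small `ε` this forces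
`d = 0`.
-/

open Real

/-- The Dirichlet energy, as a sum over ordered pairs, so each edge counts twice:
it is `2 ∫ |∇d|² dμ`. -/
def energy {V : Type*} [Fintype V] (w : V → V → ℝ) (d : V → ℝ) : ℝ :=
  ∑ x, ∑ y, w x y * (d y - d x) ^ 2

theorem energy_nonneg {V : Type*} [Fintype V] {w : V → V → ℝ}
    (hnonneg : ∀ x y, 0 ≤ w x y) (d : V → ℝ) : 0 ≤ energy w d :=
  Finset.sum_nonneg fun x _ => Finset.sum_nonneg fun y _ =>
    mul_nonneg (hnonneg x y) (sq_nonneg _)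

theorem edge_le_energy {V : Type*} [Fintype V] {w : V → V → ℝ}
    (hnonneg : ∀ x y, 0 ≤ w x y) (d : V → ℝ) (x y : V) :
    w x y * (d y - d x) ^ 2 ≤ energy w d := by
  have h1 : w x y * (d y - d x) ^ 2 ≤ ∑ z, w x z * (d z - d x) ^ 2 :=
    Finset.single_le_sum (f := fun z => w x z * (d z - d x) ^ 2)
      (fun z _ => mul_nonneg (hnonneg x z) (sq_nonneg _)) (Finset.mem_univ y)
  have h2 : ∑ z, w x z * (d z - d x) ^ 2 ≤ energy w d :=
    Finset.single_le_sum (f := fun x => ∑ z, w x z * (d z - d x) ^ 2)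
      (fun x _ => Finset.sum_nonneg fun z _ => mul_nonneg (hnonneg x z) (sq_nonneg _))
      (Finset.mem_univ x)
  exact h1.trans h2

/-- Along a walk, squared increments are controlled by the energy edge by edge. -/
theorem exists_poincare_walk {V : Type*} [Fintype V] {w : V → V → ℝ}
    (hsymm : ∀ x y, w x y = w y x) (hnonneg : ∀ x y, 0 ≤ w x y) {x y : V}
    (W : (SimpleGraph.fromRel (fun x y => 0 < w x y)).Walk x y) :
    ∃ C : ℝ, 0 ≤ C ∧ ∀ d : V → ℝ, (d x - d y) ^ 2 ≤ C * energy w d := by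
  induction W with
  | nil => exact ⟨0, le_rfl, fun d => by simp⟩
  | @cons x z y hadj W ih =>
    obtain ⟨C, hC, h⟩ := ih
    have hw : 0 < w x z := by
      rw [SimpleGraph.fromRel_adj] at hadj
      rcases hadj.2 with h | h
      · exact h
      · rwa [hsymm]
    refine ⟨2 * ((w x z)⁻¹ + C), by positivity, fun d => ?_⟩
    have h1 : (d z - d x) ^ 2 ≤ (w x z)⁻¹ * energy w d := by
      rw [inv_mul_eq_div, le_div_iff₀' hw]
      exact edge_le_energy hnonneg d x z
    nlinarith [h d, sq_nonneg ((d x - d z) - (d z - d y))]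

theorem exists_poincare {V : Type*} [Fintype V] {w : V → V → ℝ}
    (hsymm : ∀ x y, w x y = w y x) (hnonneg : ∀ x y, 0 ≤ w x y)
    (hconn : (SimpleGraph.fromRel (fun x y => 0 < w x y)).Connected) :
    ∃ C : ℝ, 0 ≤ C ∧ ∀ (d : V → ℝ) (x y : V), (d x - d y) ^ 2 ≤ C * energy w d := by
  have H : ∀ x y : V, ∃ C : ℝ, 0 ≤ C ∧ ∀ d : V → ℝ, (d x - d y) ^ 2 ≤ C * energy w d :=
    fun x y => exists_poincare_walk hsymm hnonneg (hconn.preconnected x y).some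
  choose C hC h using H
  refine ⟨∑ x, ∑ y, C x y,
    Finset.sum_nonneg fun x _ => Finset.sum_nonneg fun y _ => hC x y, fun d x y => ?_⟩
  refine (h x y d).trans (mul_le_mul_of_nonneg_right ?_ (energy_nonneg hnonneg d))
  have h1 : C x y ≤ ∑ z, C x z :=
    Finset.single_le_sum (f := fun z => C x z) (fun z _ => hC x z) (Finset.mem_univ y)
  have h2 : ∑ z, C x z ≤ ∑ x, ∑ z, C x z :=
    Finset.single_le_sum (f := fun x => ∑ z, C x z)
      (fun x _ => Finset.sum_nonneg fun z _ => hC x z) (Finset.mem_univ x)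
  exact h1.trans h2

/-- Green's formula for the unnormalised Laplacian. -/
theorem sum_mul_lap {V : Type*} [Fintype V] {w : V → V → ℝ}
    (hsymm : ∀ x y, w x y = w y x) (d : V → ℝ) :
    energy w d = -2 * ∑ x, d x * ∑ y, w x y * (d y - d x) := by
  have h1 : ∑ x, d x * ∑ y, w x y * (d y - d x) = ∑ x, ∑ y, w x y * (d x * (d y - d x)) := by
    refine Finset.sum_congr rfl fun x _ => ?_
    rw [Finset.mul_sum]
    exact Finset.sum_congr rfl fun y _ => by ring
  have h2 : ∑ x, ∑ y, w x y * (d x * (d y - d x))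
      = ∑ x, ∑ y, w x y * (d y * (d x - d y)) := by
    rw [Finset.sum_comm]
    exact Finset.sum_congr rfl fun x _ => Finset.sum_congr rfl fun y _ => by rw [hsymm y x]
  have h3 : energy w d = -(∑ x, ∑ y, w x y * (d x * (d y - d x)))
      - ∑ x, ∑ y, w x y * (d y * (d x - d y)) := by
    simp only [energy, ← Finset.sum_neg_distrib, ← Finset.sum_sub_distrib]
    exact Finset.sum_congr rfl fun x _ => Finset.sum_congr rfl fun y _ => by ring
  rw [h3, ← h2, h1]
  ring

theorem sum_lap {V : Type*} [Fintype V] {w : V → V → ℝ}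
    (hsymm : ∀ x y, w x y = w y x) (d : V → ℝ) :
    ∑ x, ∑ y, w x y * (d y - d x) = 0 := by
  have h : ∑ x, ∑ y, w x y * (d y - d x) = -∑ x, ∑ y, w x y * (d y - d x) := by
    conv_lhs => rw [Finset.sum_comm]
    simp only [← Finset.sum_neg_distrib]
    exact Finset.sum_congr rfl fun x _ => Finset.sum_congr rfl fun y _ => by
      rw [hsymm y x]; ring
  linarith

theorem lap_eq_of_glap {V : Type*} [Fintype V] {w : V → V → ℝ} {μ : V → ℝ}
    (hμ : ∀ x, 0 < μ x) {u : V → ℝ} {x : V} {c : ℝ} (h : glap w μ u x = c) :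
    ∑ y, w x y * (u y - u x) = μ x * c := by
  rw [← h, glap, one_div, mul_inv_cancel_left₀ (hμ x).ne']

/-- The integral of the exponential of a solution is determined by `lam`, `ε` and `f`. -/
theorem sum_mul_exp {V : Type*} [Fintype V] {w : V → V → ℝ} {μ : V → ℝ}
    (hsymm : ∀ x y, w x y = w y x) (hμ : ∀ x, 0 < μ x) {a lam ε : ℝ} {f u : V → ℝ}
    (hu : ∀ x, glap w μ u x = lam * Real.exp (a * u x) + ε * f x) :
    lam * ∑ x, μ x * Real.exp (a * u x) = -(ε * gint μ f) := by
  have h := sum_lap hsymm u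
  rw [Finset.sum_congr rfl fun x _ => lap_eq_of_glap hμ (hu x)] at h
  rw [gint, Finset.mul_sum, Finset.mul_sum, ← add_eq_zero_iff_eq_neg, ← Finset.sum_add_distrib,
    ← h]
  exact Finset.sum_congr rfl fun x _ => by ring

/-- Solutions are uniformly very negative when `ε` is small. -/
theorem mul_exp_le {V : Type*} [Fintype V] {w : V → V → ℝ} {μ : V → ℝ}
    (hsymm : ∀ x y, w x y = w y x) (hμ : ∀ x, 0 < μ x) {a lam ε Λ : ℝ} {f u : V → ℝ}
    (hΛ : 0 < Λ) (hε : 0 < ε) (hlam : Λ⁻¹ ≤ |lam|) (hf : |gint μ f| ≤ Λ)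
    (hu : ∀ x, glap w μ u x = lam * Real.exp (a * u x) + ε * f x) (x : V) :
    μ x * Real.exp (a * u x) ≤ ε * Λ ^ 2 := by
  have hpos : ∀ x, 0 ≤ μ x * Real.exp (a * u x) := fun x =>
    mul_nonneg (hμ x).le (Real.exp_pos _).le
  set S := ∑ x, μ x * Real.exp (a * u x) with hS
  have hS0 : 0 ≤ S := Finset.sum_nonneg fun x _ => hpos x
  have h1 : |lam| * S = ε * |gint μ f| := by
    have := congrArg abs (sum_mul_exp hsymm hμ hu)
    rwa [abs_neg, abs_mul, abs_mul, abs_of_pos hε, ← hS, abs_of_nonneg hS0] at this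
  have h2 : Λ⁻¹ * S ≤ ε * Λ :=
    (mul_le_mul_of_nonneg_right hlam hS0).trans
      (h1.le.trans (mul_le_mul_of_nonneg_left hf hε.le))
  rw [inv_mul_le_iff₀ hΛ] at h2
  have h3 : μ x * Real.exp (a * u x) ≤ S :=
    Finset.single_le_sum (f := fun x => μ x * Real.exp (a * u x)) (fun x _ => hpos x)
      (Finset.mem_univ x)
  nlinarith

/-- Mean value estimate for `exp`, with the larger endpoint value replaced by a bound `B` that
carries the weight `m`. -/
theorem mul_exp_sub_mul_le {m s t B : ℝ} (hm : 0 ≤ m) (hs : m * Real.exp s ≤ B)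
    (ht : m * Real.exp t ≤ B) :
    |m * (Real.exp s - Real.exp t) * (s - t)| ≤ B * (s - t) ^ 2 := by
  wlog h : t ≤ s generalizing s t
  · have := this ht hs (le_of_not_ge h)
    convert this using 2 <;> ring
  have h1 : 0 ≤ Real.exp s - Real.exp t := sub_nonneg.2 (Real.exp_le_exp.2 h)
  have h2 : Real.exp s - Real.exp t ≤ Real.exp s * (s - t) := by
    have h3 := Real.add_one_le_exp (t - s)
    have h4 : Real.exp t = Real.exp s * Real.exp (t - s) := by
      rw [← Real.exp_add]; ring_nf
    rw [h4]
    nlinarith [Real.exp_pos s]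
  have h0 : 0 ≤ s - t := sub_nonneg.2 h
  rw [abs_of_nonneg (by positivity)]
  calc m * (Real.exp s - Real.exp t) * (s - t)
      ≤ m * (Real.exp s * (s - t)) * (s - t) := by gcongr
    _ = (m * Real.exp s) * (s - t) ^ 2 := by ring
    _ ≤ B * (s - t) ^ 2 := by gcongr

/-- The energy of the difference of two solutions is at most a multiple of `ε` times the squared
supremum norm of the difference. -/
theorem energy_sub_le {V : Type*} [Fintype V] {w : V → V → ℝ} {μ : V → ℝ}
    (hsymm : ∀ x y, w x y = w y x) (hμ : ∀ x, 0 < μ x) {a lam ε Λ M : ℝ} {f u v : V → ℝ}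
    (ha : 0 < a) (hΛ : 0 < Λ) (hε : 0 < ε) (hlam : Λ⁻¹ ≤ |lam|) (hlam' : |lam| ≤ Λ)
    (hf : |gint μ f| ≤ Λ)
    (hu : ∀ x, glap w μ u x = lam * Real.exp (a * u x) + ε * f x)
    (hv : ∀ x, glap w μ v x = lam * Real.exp (a * v x) + ε * f x)
    (hM : ∀ x, (u x - v x) ^ 2 ≤ M) :
    energy w (fun x => u x - v x) ≤ 2 * Fintype.card V * a * Λ ^ 3 * ε * M := by
  have hlap : ∀ x, ∑ y, w x y * ((u y - v y) - (u x - v x))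
      = lam * (μ x * (Real.exp (a * u x) - Real.exp (a * v x))) := fun x => by
    have h : ∑ y, w x y * ((u y - v y) - (u x - v x))
        = ∑ y, w x y * (u y - u x) - ∑ y, w x y * (v y - v x) := by
      rw [← Finset.sum_sub_distrib]
      exact Finset.sum_congr rfl fun y _ => by ring
    rw [h, lap_eq_of_glap hμ (hu x), lap_eq_of_glap hμ (hv x)]
    ring
  rw [sum_mul_lap hsymm, Finset.mul_sum]
  have hterm : ∀ x ∈ Finset.univ, -2 * ((u x - v x) * ∑ y, w x y * ((u y - v y) - (u x - v x)))
      ≤ 2 * a * Λ ^ 3 * ε * M := fun x _ => by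
    have h1 := mul_exp_sub_mul_le (hμ x).le (mul_exp_le hsymm hμ hΛ hε hlam hf hu x)
      (mul_exp_le hsymm hμ hΛ hε hlam hf hv x)
    set T := μ x * (Real.exp (a * u x) - Real.exp (a * v x)) with hT
    have h2 : |T * (u x - v x)| ≤ ε * Λ ^ 2 * a * M := by
      rw [← mul_sub, ← mul_assoc, mul_right_comm, abs_mul, abs_of_pos ha] at h1
      have h3 : a * |T * (u x - v x)| ≤ a * (ε * Λ ^ 2 * a * (u x - v x) ^ 2) := by
        linarith
      exact (le_of_mul_le_mul_left h3 ha).trans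
        (mul_le_mul_of_nonneg_left (hM x) (by positivity))
    rw [hlap x]
    calc -2 * ((u x - v x) * (lam * T)) ≤ 2 * |lam * (T * (u x - v x))| := by
          have := neg_abs_le (lam * (T * (u x - v x)))
          linarith
      _ = 2 * (|lam| * |T * (u x - v x)|) := by rw [abs_mul]
      _ ≤ 2 * (Λ * (ε * Λ ^ 2 * a * M)) := by gcongr
      _ = 2 * a * Λ ^ 3 * ε * M := by ring
  refine (Finset.sum_le_sum hterm).trans (le_of_eq ?_)
  rw [Finset.sum_const, nsmul_eq_mul, Finset.card_univ]
  ring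

/-- Two solutions cannot be strictly ordered, since their exponentials have equal integrals. -/
theorem exists_le_of_solutions {V : Type*} [Fintype V] [Nonempty V] {w : V → V → ℝ} {μ : V → ℝ}
    (hsymm : ∀ x y, w x y = w y x) (hμ : ∀ x, 0 < μ x) {a lam ε : ℝ} {f u v : V → ℝ}
    (ha : 0 < a) (hlam : lam ≠ 0)
    (hu : ∀ x, glap w μ u x = lam * Real.exp (a * u x) + ε * f x)
    (hv : ∀ x, glap w μ v x = lam * Real.exp (a * v x) + ε * f x) :
    ∃ x, u x ≤ v x := by
  by_contra! h
  have heq := mul_left_cancel₀ hlam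
    ((sum_mul_exp hsymm hμ hu).trans (sum_mul_exp hsymm hμ hv).symm)
  refine (Finset.sum_lt_sum_of_nonempty Finset.univ_nonempty fun x _ => ?_).ne heq.symm
  exact mul_lt_mul_of_pos_left (Real.exp_lt_exp.2 (mul_lt_mul_of_pos_left (h x) ha)) (hμ x)

theorem stmt_10 {V : Type*} [Fintype V] [Nonempty V]
    (w : V → V → ℝ) (μ : V → ℝ)
    (hsymm : ∀ x y, w x y = w y x) (hnonneg : ∀ x y, 0 ≤ w x y)
    (hμ : ∀ x, 0 < μ x)
    (hconn : (SimpleGraph.fromRel (fun x y => 0 < w x y)).Connected)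
    (Λ : ℝ) (hΛ : 0 < Λ) (p : ℕ) :
    ∃ ε₀ > 0, ∀ ε : ℝ, 0 < ε → ε < ε₀ →
      ∀ lam : ℝ, ∀ f : V → ℝ,
        Λ⁻¹ ≤ |lam| → |lam| ≤ Λ → |gint μ f| ≤ Λ →
        ∀ u v : V → ℝ,
          (∀ x, glap w μ u x = lam * Real.exp ((2 * p + 2) * u x) + ε * f x) →
          (∀ x, glap w μ v x = lam * Real.exp ((2 * p + 2) * v x) + ε * f x) →
          u = v := by
  obtain ⟨C, hC, hP⟩ := exists_poincare hsymm hnonneg hconn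
  have ha : (0 : ℝ) < 2 * p + 2 := by positivity
  set K : ℝ := C * (2 * Fintype.card V * (2 * p + 2) * Λ ^ 3) with hK
  have hK0 : 0 ≤ K := by positivity
  refine ⟨1 / (K + 1), by positivity, ?_⟩
  intro ε hε hε' lam f hlam hlam' hf u v hu hv
  have hlam0 : lam ≠ 0 := abs_pos.1 ((inv_pos.2 hΛ).trans_le hlam)
  obtain ⟨x₀, hx₀⟩ := Finite.exists_max fun x => (u x - v x) ^ 2
  -- At a vertex `z` where `u - v` has the opposite sign, the increment from `x₀` dominates.
  have hosc : ∃ z, (u x₀ - v x₀) ^ 2 ≤ ((u x₀ - v x₀) - (u z - v z)) ^ 2 := by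
    rcases le_total 0 (u x₀ - v x₀) with h | h
    · obtain ⟨z, hz⟩ := exists_le_of_solutions hsymm hμ ha hlam0 hu hv
      exact ⟨z, by nlinarith⟩
    · obtain ⟨z, hz⟩ := exists_le_of_solutions hsymm hμ ha hlam0 hv hu
      exact ⟨z, by nlinarith⟩
  obtain ⟨z, hz⟩ := hosc
  have hE := energy_sub_le hsymm hμ ha hΛ hε hlam hlam' hf hu hv hx₀
  have hle : (u x₀ - v x₀) ^ 2 ≤ K * ε * (u x₀ - v x₀) ^ 2 :=
    calc (u x₀ - v x₀) ^ 2 ≤ ((u x₀ - v x₀) - (u z - v z)) ^ 2 := hz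
      _ ≤ C * energy w (fun x => u x - v x) := hP (fun x => u x - v x) x₀ z
      _ ≤ C * (2 * Fintype.card V * (2 * p + 2) * Λ ^ 3 * ε * (u x₀ - v x₀) ^ 2) := by gcongr
      _ = K * ε * (u x₀ - v x₀) ^ 2 := by rw [hK]; ring
  have hKε : K * ε < 1 := by
    rw [lt_div_iff₀ (by positivity)] at hε'
    linarith
  have hzero : (u x₀ - v x₀) ^ 2 ≤ 0 := by nlinarith [sq_nonneg (u x₀ - v x₀)]
  funext x
  have hx : (u x - v x) ^ 2 = 0 := le_antisymm ((hx₀ x).trans hzero) (sq_nonneg _)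
  exact sub_eq_zero.1 (pow_eq_zero_iff two_ne_zero |>.1 hx)
end
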